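/- Let (u, w, b, Π) be a smooth solution of the stationary magneto-micropolar equations on ℝ³ satisfying the potential growth hypothesis: there exist smooth Φ, Ψ, Υ : ℝ³ → ℝ^{3×3} with div Φ = u, div Ψ = b, div Υ = w, an exponent s ∈ (3, 6], and a constant C₀ > 0 such that the sum of the s-mean oscillations (|B_r|^{-1} ∫_{B_r} |Φ − Φ_{B_r}|^s dx)^{1/s} + (|B_r|^{-1} ∫_{B_r} |Ψ − Ψ_{B_r}|^s dx)^{1/s} + (|B_r|^{-1} ∫_{B_r} |Υ − Υ_{B_r}|^s dx)^{1/s} ≤ C₀ r^{1/3 − 1/s} for all r > 1. Then there is a constant C > 0 (depending on the solution, C₀ and s) such that for all r > 1: r^{−1} ∫_{B_{2r}∖B_r} (|u|³ + |b|³ + |w|³) dx ≤ C [ ‖∇u‖_{L²(B_{4r}∖B_{r/2})}^{18/(s+6)} + ‖∇b‖_{L²(B_{4r}∖B_{r/2})}^{18/(s+6)} + ‖∇w‖_{L²(B_{4r}∖B_{r/2})}^{18/(s+6)} + r^{−3/s} ]. -/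

import Mathlib

open MeasureTheory Real Filter Metric
open scoped Topology ENNReal

noncomputable section

/-- Three-dimensional Euclidean space. -/
abbrev E3 := EuclideanSpace ℝ (Fin 3)

/-- Partial derivative in the `i`-th coordinate direction. -/
def pd (i : Fin 3) (f : E3 → ℝ) (x : E3) : ℝ := fderiv ℝ f x (EuclideanSpace.single i 1)

/-- Laplacian of a scalar function. -/
def lap (f : E3 → ℝ) (x : E3) : ℝ := ∑ i, pd i (fun y => pd i f y) x

/-- Divergence of a vector field. -/
def vdiv (v : E3 → E3) (x : E3) : ℝ := ∑ i, pd i (fun y => v y i) x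

/-- Curl of a vector field on ℝ³. -/
def curl3 (v : E3 → E3) (x : E3) : Fin 3 → ℝ :=
  ![pd 1 (fun y => v y 2) x - pd 2 (fun y => v y 1) x,
    pd 2 (fun y => v y 0) x - pd 0 (fun y => v y 2) x,
    pd 0 (fun y => v y 1) x - pd 1 (fun y => v y 0) x]

/-- Squared norm of the full gradient of a vector field: |∇v|² = Σᵢⱼ (∂ᵢ vⱼ)². -/
def gradSq (v : E3 → E3) (x : E3) : ℝ := ∑ j, ∑ i, (pd i (fun y => v y j) x) ^ 2

/-- The open ball of radius `r` centered at the origin. -/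
def ball3 (r : ℝ) : Set E3 := Metric.ball (0 : E3) r

/-- `(u, w, b, Π)` is a smooth solution of the stationary magneto-micropolar equations on ℝ³
(with all physical constants set to 1):
−Δu + (u·∇)u + ∇Π = ∇×w + (b·∇)b; −Δw + (u·∇)w = ∇(div w) + ∇×u − 2w;
−Δb + (u·∇)b = (b·∇)u; div u = 0, div b = 0. -/
structure IsMMPSolution (u w b : E3 → E3) (P : E3 → ℝ) : Prop where
  smooth_u : ContDiff ℝ (⊤ : ℕ∞) u
  smooth_w : ContDiff ℝ (⊤ : ℕ∞) w
  smooth_b : ContDiff ℝ (⊤ : ℕ∞) b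
  smooth_P : ContDiff ℝ (⊤ : ℕ∞) P
  eq_u : ∀ x : E3, ∀ j : Fin 3,
    -(lap (fun y => u y j) x) + (∑ i, u x i * pd i (fun y => u y j) x) + pd j P x
      = curl3 w x j + ∑ i, b x i * pd i (fun y => b y j) x
  eq_w : ∀ x : E3, ∀ j : Fin 3,
    -(lap (fun y => w y j) x) + (∑ i, u x i * pd i (fun y => w y j) x)
      = pd j (fun y => vdiv w y) x + curl3 u x j - 2 * w x j
  eq_b : ∀ x : E3, ∀ j : Fin 3,
    -(lap (fun y => b y j) x) + (∑ i, u x i * pd i (fun y => b y j) x)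
      = ∑ i, b x i * pd i (fun y => u y j) x
  div_u : ∀ x : E3, vdiv u x = 0
  div_b : ∀ x : E3, vdiv b x = 0

/-- Divergence of a matrix-valued function: (div Φ)ⱼ = Σᵢ ∂ᵢ Φᵢⱼ. -/
def mdiv (Φ : E3 → Fin 3 → Fin 3 → ℝ) (x : E3) (j : Fin 3) : ℝ :=
  ∑ i, pd i (fun y => Φ y i j) x

/-- Mean value of a matrix-valued function over the ball of radius `r`. -/
def mavg (Φ : E3 → Fin 3 → Fin 3 → ℝ) (r : ℝ) (i j : Fin 3) : ℝ :=
  (volume (ball3 r)).toReal⁻¹ * ∫ x in ball3 r, Φ x i j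

/-- Frobenius norm of a 3×3 matrix. -/
def frob (A : Fin 3 → Fin 3 → ℝ) : ℝ := Real.sqrt (∑ i, ∑ j, (A i j) ^ 2)

/-- The `s`-mean oscillation of `Φ` over the ball of radius `r`:
`(|B_r|⁻¹ ∫_{B_r} |Φ − Φ_{B_r}|^s dx)^(1/s)`. -/
def meanOsc (Φ : E3 → Fin 3 → Fin 3 → ℝ) (s r : ℝ) : ℝ :=
  ((volume (ball3 r)).toReal⁻¹ *
      ∫ x in ball3 r, (frob fun i j => Φ x i j - mavg Φ r i j) ^ s) ^ (1 / s)

/-!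
A component `f` of `u`, `b` or `w` is the divergence of a centred column `G` of the potential
(`oscColumn`). Testing `div G = f` against `f η ^ 2` gives a Caccioppoli inequality, which together
with Sobolev's inequality bounds the `L⁶` norm of `f η ^ 2` by the gradient and the oscillation.
Testing it against `f |f| η ^ 6` bounds `∫ (|f| η ^ 2) ^ 3` by `∫ |G| |∇f| |f| η ^ 2` and a lower
order term. Young's inequality splits `|G| |∇f| |f| η ^ 2` into the `s`-th power of `G`, the square
of `∇f`, the sixth power of `f η ^ 2` and a small multiple of its cube, which is absorbed.
-/

section RealInequalities

theorem hasDerivAt_mul_abs (t : ℝ) : HasDerivAt (fun t : ℝ => t * |t|) (2 * |t|) t := by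
  refine hasDerivAt_of_hasDerivAt_of_ne' (x := 0) (g := fun t : ℝ => 2 * |t|) (fun y hy => ?_)
    (by fun_prop) (by fun_prop) t
  refine ((hasDerivAt_id y).mul (hasDerivAt_abs hy)).congr_deriv ?_
  rcases hy.lt_or_gt with h | h
  · simp only [id, one_mul, abs_of_neg h, sign_neg h, SignType.coe_neg, SignType.coe_one]; ring
  · simp only [id, one_mul, abs_of_pos h, sign_pos h, SignType.coe_one]; ring

theorem contDiff_mul_abs : ContDiff ℝ 1 fun t : ℝ => t * |t| := by
  refine contDiff_one_iff_deriv.2 ⟨fun t => (hasDerivAt_mul_abs t).differentiableAt, ?_⟩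
  rw [funext fun t => (hasDerivAt_mul_abs t).deriv]
  fun_prop

theorem mul_sq_le_mul_cube_add {a v ε : ℝ} (ha : 0 ≤ a) (hv : 0 ≤ v) (hε : 0 < ε) :
    a * v ^ 2 ≤ ε * v ^ 3 + a ^ 3 / ε ^ 2 := by
  rcases le_total a (ε * v) with h | h
  · calc a * v ^ 2 ≤ ε * v * v ^ 2 := by gcongr
      _ = ε * v ^ 3 := by ring
      _ ≤ ε * v ^ 3 + a ^ 3 / ε ^ 2 := le_add_of_nonneg_right (by positivity)
  · have hva : v ≤ a / ε := (le_div_iff₀' hε).2 h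
    calc a * v ^ 2 ≤ a * (a / ε) ^ 2 := by gcongr
      _ = a ^ 3 / ε ^ 2 := by ring
      _ ≤ ε * v ^ 3 + a ^ 3 / ε ^ 2 := le_add_of_nonneg_left (by positivity)

theorem mul_mul_add_two_mul_le {θ d g p δ : ℝ} (hθ : θ ≤ 1) (hd : 0 ≤ d) (hg : 0 ≤ g)
    (hδ : 0 < δ) : θ * (d * g) + 2 * (p * (δ * g)) ≤
      1 / 2 * p ^ 2 + (d ^ 2 / (2 * δ ^ 2) + 5 / 2 * (δ ^ 2 * g ^ 2)) := by
  have h₁ : θ * (d * g) ≤ d / δ * (δ * g) :=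
    (mul_le_of_le_one_left (by positivity) hθ).trans_eq (by field_simp)
  have h₂ : d ^ 2 / (2 * δ ^ 2) = (d / δ) ^ 2 / 2 := by field_simp
  linarith [two_mul_le_add_sq (d / δ) (δ * g), two_mul_le_add_sq p (2 * (δ * g))]

theorem rpow_le_rpow_add_rpow_sub_mul {a l s q : ℝ} (ha : 0 ≤ a) (hl : 0 < l) (hq : 0 ≤ q)
    (hqs : q ≤ s) : a ^ q ≤ l ^ q + l ^ (q - s) * a ^ s := by
  rcases le_total a l with h | h
  · calc a ^ q ≤ l ^ q := by gcongr
      _ ≤ l ^ q + l ^ (q - s) * a ^ s := le_add_of_nonneg_right (by positivity)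
  · calc a ^ q = a ^ (q - s) * a ^ s := by rw [← Real.rpow_add (hl.trans_le h), sub_add_cancel]
      _ ≤ l ^ (q - s) * a ^ s :=
        mul_le_mul_of_nonneg_right (Real.rpow_le_rpow_of_nonpos hl h (by linarith)) (by positivity)
      _ ≤ l ^ q + l ^ (q - s) * a ^ s := le_add_of_nonneg_left (by positivity)

/- The factors are raised to the weights of a weighted AM-GM inequality: `1/s`, `1/2`, `1/s - 1/6`
and `2/3 - 2/s` add up to `1`, and the prefactor is the one for which all powers of `N` and `κ`
cancel. -/
theorem rpow_mul_geom_mean_eq {s N κ a d v : ℝ} (hs : 0 < s) (hN : 0 < N) (hκ : 0 < κ)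
    (ha : 0 < a) (hd : 0 < d) (hv : 0 < v) :
    ((N * κ) ^ (9 / (s + 6)) * (a ^ s / N ^ 3)) ^ (1 / s) *
      ((N * κ) ^ (9 / (s + 6)) * (d ^ 2 / κ)) ^ ((1 : ℝ) / 2) *
      ((N * κ) ^ (9 / (s + 6)) * (v ^ 6 / κ ^ 3)) ^ (1 / s - 1 / 6) *
      (v ^ 3) ^ (2 / 3 - 2 * (1 / s)) = a * d * v := by
  obtain ⟨α, rfl⟩ : ∃ t, rexp t = a := ⟨_, Real.exp_log ha⟩
  obtain ⟨β, rfl⟩ : ∃ t, rexp t = d := ⟨_, Real.exp_log hd⟩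
  obtain ⟨γ, rfl⟩ : ∃ t, rexp t = v := ⟨_, Real.exp_log hv⟩
  obtain ⟨ν, rfl⟩ : ∃ t, rexp t = N := ⟨_, Real.exp_log hN⟩
  obtain ⟨k, rfl⟩ : ∃ t, rexp t = κ := ⟨_, Real.exp_log hκ⟩
  simp only [← Real.exp_mul, ← Real.exp_add, ← Real.exp_sub, ← Real.exp_nat_mul]
  congr 1
  push_cast
  field_simp
  ring

theorem mul_mul_le_rpow_mul_add {s N κ a d v : ℝ} (hs3 : 3 ≤ s) (hs6 : s ≤ 6) (hN : 0 < N)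
    (hκ : 0 < κ) (ha : 0 ≤ a) (hd : 0 ≤ d) (hv : 0 ≤ v) :
    a * d * v ≤ (N * κ) ^ (9 / (s + 6)) * (a ^ s / N ^ 3 + d ^ 2 / κ + v ^ 6 / κ ^ 3)
      + v ^ 3 / 3 := by
  rcases ha.eq_or_lt with rfl | ha
  · rw [zero_mul, zero_mul]; positivity
  rcases hd.eq_or_lt with rfl | hd
  · rw [mul_zero, zero_mul]; positivity
  rcases hv.eq_or_lt with rfl | hv
  · rw [mul_zero]; positivity
  have hs0 : 0 < s := by linarith
  have hs3' : 1 / s ≤ 1 / 3 := one_div_le_one_div_of_le (by norm_num) hs3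
  have hs6' : 1 / 6 ≤ 1 / s := one_div_le_one_div_of_le hs0 hs6
  rw [← rpow_mul_geom_mean_eq hs0 hN hκ ha hd hv]
  set T := (N * κ) ^ (9 / (s + 6))
  have h₁ : 1 / s * (T * (a ^ s / N ^ 3)) ≤ T * (a ^ s / N ^ 3) :=
    mul_le_of_le_one_left (by positivity) (by linarith)
  have h₂ : 1 / 2 * (T * (d ^ 2 / κ)) ≤ T * (d ^ 2 / κ) :=
    mul_le_of_le_one_left (by positivity) (by norm_num)
  have h₃ : (1 / s - 1 / 6) * (T * (v ^ 6 / κ ^ 3)) ≤ T * (v ^ 6 / κ ^ 3) :=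
    mul_le_of_le_one_left (by positivity) (by linarith)
  have h₄ : (2 / 3 - 2 * (1 / s)) * v ^ 3 ≤ 1 / 3 * v ^ 3 :=
    mul_le_mul_of_nonneg_right (by linarith) (by positivity)
  refine (Real.geom_mean_le_arith_mean4_weighted (by positivity) (by norm_num) (by linarith)
    (by linarith) (by positivity) (by positivity) (by positivity) (by positivity)
    (by ring)).trans ?_
  linarith

end RealInequalities

theorem integral_rpow_le_of_integral_rpow_le {α : Type*} [MeasurableSpace α] {μ : Measure α}
    [IsFiniteMeasure μ] {g : α → ℝ} {m M V l q s : ℝ} (hg : ∀ x, 0 ≤ g x) (hl : 0 < l)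
    (hq : 0 ≤ q) (hqs : q ≤ s) (hgs : Integrable (fun x => g x ^ s) μ)
    (hμ : μ.real Set.univ ≤ m * V) (hs : ∫ x, g x ^ s ∂μ ≤ M * (V * l ^ s)) :
    ∫ x, g x ^ q ∂μ ≤ (m + M) * (V * l ^ q) := by
  calc ∫ x, g x ^ q ∂μ ≤ ∫ x, (l ^ q + l ^ (q - s) * g x ^ s) ∂μ :=
        integral_mono_of_nonneg (.of_forall fun x => Real.rpow_nonneg (hg x) q)
          ((integrable_const _).add (hgs.const_mul _))
          (.of_forall fun x => rpow_le_rpow_add_rpow_sub_mul (hg x) hl hq hqs)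
    _ = μ.real Set.univ * l ^ q + l ^ (q - s) * ∫ x, g x ^ s ∂μ := by
        rw [integral_add (integrable_const _) (hgs.const_mul _), integral_const_mul,
          integral_const, smul_eq_mul]
    _ ≤ m * V * l ^ q + l ^ (q - s) * (M * (V * l ^ s)) := by gcongr
    _ = (m + M) * (V * l ^ q) := by
        rw [show l ^ q = l ^ (q - s) * l ^ s by rw [← Real.rpow_add hl, sub_add_cancel]]
        ring

theorem norm_pow_succ_le_card_pow_mul_sum {ι : Type*} [Fintype ι] (v : EuclideanSpace ℝ ι)
    (n : ℕ) : ‖v‖ ^ (n + 1) ≤ (Fintype.card ι : ℝ) ^ n * ∑ i, |v i| ^ (n + 1) := by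
  have norm_le_sum : ‖v‖ ≤ ∑ i, |v i| := by
    rw [EuclideanSpace.norm_eq]
    refine Real.sqrt_le_iff.2 ⟨Finset.sum_nonneg fun _ _ => abs_nonneg _, ?_⟩
    exact Finset.sum_sq_le_sq_sum_of_nonneg fun i _ => abs_nonneg (v i)
  calc ‖v‖ ^ (n + 1) ≤ (∑ i, |v i|) ^ (n + 1) := by gcongr
    _ ≤ (Fintype.card ι : ℝ) ^ n * ∑ i, |v i| ^ (n + 1) :=
      pow_sum_le_card_mul_sum_pow (fun i _ => abs_nonneg (v i)) n

section Calculus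

variable {E : Type*} [NormedAddCommGroup E]

theorem integrableOn_of_continuous_of_isBounded [ProperSpace E] [MeasurableSpace E]
    [OpensMeasurableSpace E] {μ : Measure E} [IsFiniteMeasureOnCompacts μ] {f : E → ℝ} {A : Set E}
    (hf : Continuous f) (hA : Bornology.IsBounded A) : IntegrableOn f A μ :=
  (hf.continuousOn.integrableOn_compact hA.isCompact_closure).mono_set subset_closure

theorem fderiv_mul_pow_apply [NormedSpace ℝ E] {φ η : E → ℝ} {x : E}
    (hφ : DifferentiableAt ℝ φ x) (hη : DifferentiableAt ℝ η x) (n : ℕ) (y : E) :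
    fderiv ℝ (fun x => φ x * η x ^ n) x y =
      η x ^ n * fderiv ℝ φ x y + n * (φ x * η x ^ (n - 1) * fderiv ℝ η x y) := by
  rw [fderiv_fun_mul hφ (hη.fun_pow n), fderiv_fun_pow n hη]
  simp only [nsmul_eq_mul, add_apply, smul_apply, smul_eq_mul]
  ring

theorem norm_fderiv_mul_abs [NormedSpace ℝ E] {f : E → ℝ} {x : E} (hf : DifferentiableAt ℝ f x) :
    ‖fderiv ℝ (fun x => f x * |f x|) x‖ = 2 * |f x| * ‖fderiv ℝ f x‖ := by
  have : HasFDerivAt (fun x => f x * |f x|) ((2 * |f x|) • fderiv ℝ f x) x :=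
    (hasDerivAt_mul_abs (f x)).comp_hasFDerivAt x hf.hasFDerivAt
  rw [this.fderiv, norm_smul, Real.norm_of_nonneg (by positivity)]

theorem exists_integral_pow_six_le [InnerProductSpace ℝ E] [FiniteDimensional ℝ E]
    [MeasurableSpace E] [BorelSpace E] (μ : Measure E) [μ.IsAddHaarMeasure]
    (hE : Module.finrank ℝ E = 3) : ∃ S : ℝ, 0 ≤ S ∧ ∀ h : E → ℝ, ContDiff ℝ 1 h →
      HasCompactSupport h → ∫ x, h x ^ 6 ∂μ ≤ (S * ∫ x, ‖fderiv ℝ h x‖ ^ 2 ∂μ) ^ 3 := by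
  set K := eLpNormLESNormFDerivOfEqInnerConst μ (2 : NNReal)
  refine ⟨K ^ 2, by positivity, fun h hh hs => ?_⟩
  have sobolev := eLpNorm_le_eLpNorm_fderiv_of_eq_inner (μ := μ) hh hs
    (p := 2) (p' := 6) (by norm_num) (by simp [hE]) (by norm_num [hE])
  have memLp_six : MemLp h (6 : NNReal) μ := hh.continuous.memLp_of_hasCompactSupport hs
  have memLp_two : MemLp (fderiv ℝ h) (2 : NNReal) μ :=
    (hh.continuous_fderiv one_ne_zero).memLp_of_hasCompactSupport (hs.fderiv ℝ)
  rw [memLp_six.eLpNorm_eq_integral_rpow_norm (by simp) (by simp),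
    memLp_two.eLpNorm_eq_integral_rpow_norm (by simp) (by simp),
    ← ENNReal.ofReal_coe_nnreal (p := K), ← ENNReal.ofReal_mul (by positivity),
    ENNReal.ofReal_le_ofReal_iff (by positivity)] at sobolev
  simp only [ENNReal.coe_toReal, NNReal.coe_ofNat, Real.rpow_ofNat, Real.norm_eq_abs,
    Even.pow_abs (by decide : Even 6)] at sobolev
  set I := ∫ x, ‖fderiv ℝ h x‖ ^ 2 ∂μ
  have hI : 0 ≤ I := integral_nonneg fun x => by positivity
  have sq_sqrt : (I ^ (2 : ℝ)⁻¹) ^ 2 = I := by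
    simpa using Real.rpow_inv_natCast_pow hI two_ne_zero
  calc ∫ x, h x ^ 6 ∂μ = ((∫ x, h x ^ 6 ∂μ) ^ (6 : ℝ)⁻¹) ^ 6 :=
        (Real.rpow_inv_natCast_pow (integral_nonneg fun x => by positivity) (by norm_num)).symm
    _ ≤ (K * I ^ (2 : ℝ)⁻¹) ^ 6 := by gcongr
    _ = (K ^ 2 * (I ^ (2 : ℝ)⁻¹) ^ 2) ^ 3 := by ring
    _ = (K ^ 2 * I) ^ 3 := by rw [sq_sqrt]

end Calculus

section Cutoff

variable {E : Type*} [NormedAddCommGroup E] [NormedSpace ℝ E] {A B : Set E} {η : E → ℝ} {δ : ℝ}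

/-- `η` is a `C¹` cutoff function with values in `[0, 1]`, equal to `1` on `B`, vanishing outside
`A`, and with slope at most `δ`. -/
structure IsCutoff (η : E → ℝ) (A B : Set E) (δ : ℝ) : Prop where
  contDiff : ContDiff ℝ 1 η
  nonneg : ∀ x, 0 ≤ η x
  le_one : ∀ x, η x ≤ 1
  eq_zero : ∀ x ∉ A, η x = 0
  eq_one : ∀ x ∈ B, η x = 1
  norm_fderiv_le : ∀ x, ‖fderiv ℝ η x‖ ≤ δ

theorem IsCutoff.subset (hη : IsCutoff η A B δ) : B ⊆ A := fun x hx =>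
  by_contra fun hxA => zero_ne_one ((hη.eq_zero x hxA).symm.trans (hη.eq_one x hx))

theorem IsCutoff.hasCompactSupport_mul_pow [ProperSpace E] (hη : IsCutoff η A B δ)
    (hA : Bornology.IsBounded A) (φ : E → ℝ) {n : ℕ} (hn : n ≠ 0) :
    HasCompactSupport fun x => φ x * η x ^ n :=
  .of_support_subset_isCompact hA.isCompact_closure fun x hx =>
    subset_closure (by_contra fun hxA => hx (by simp [hη.eq_zero x hxA, hn]))

open scoped Pointwise in
theorem IsCutoff.comp_inv_smul (hη : IsCutoff η A B δ) {r : ℝ} (hr : 0 < r) :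
    IsCutoff (fun x => η (r⁻¹ • x)) (r • A) (r • B) (δ / r) where
  contDiff := hη.contDiff.comp (contDiff_const_smul _)
  nonneg x := hη.nonneg _
  le_one x := hη.le_one _
  eq_zero x hx := hη.eq_zero _ fun h => hx ((Set.mem_smul_set_iff_inv_smul_mem₀ hr.ne' A x).2 h)
  eq_one x hx := hη.eq_one _ ((Set.mem_smul_set_iff_inv_smul_mem₀ hr.ne' B x).1 hx)
  norm_fderiv_le x := by
    rw [fderiv_comp_smul, norm_smul, norm_inv, Real.norm_of_nonneg hr.le, inv_mul_eq_div]
    gcongr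
    exact hη.norm_fderiv_le _

theorem exists_isCutoff_ball_four_sdiff_ball_half (E : Type*) [NormedAddCommGroup E]
    [InnerProductSpace ℝ E] [FiniteDimensional ℝ E] : ∃ L : ℝ, 0 < L ∧ ∃ η : E → ℝ,
      IsCutoff η (ball 0 4 \ ball 0 (1 / 2)) (ball 0 2 \ ball 0 1) L := by
  let φ₁ : ContDiffBump (0 : E) := ⟨2, 4, by norm_num, by norm_num⟩
  let φ₂ : ContDiffBump (0 : E) := ⟨1 / 2, 1, by norm_num, by norm_num⟩
  let ψ : E → ℝ := fun x => φ₁ x * (1 - φ₂ x)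
  have hψ : ContDiff ℝ 1 ψ := φ₁.contDiff.mul (contDiff_const.sub φ₂.contDiff)
  have hψs : HasCompactSupport ψ := φ₁.hasCompactSupport.mul_right
  obtain ⟨L, hL⟩ := (hψ.continuous_fderiv one_ne_zero).bounded_above_of_compact_support
    (hψs.fderiv ℝ)
  refine ⟨max L 1, by positivity, ψ, hψ, fun x => mul_nonneg φ₁.nonneg (sub_nonneg.2 φ₂.le_one),
    fun x => mul_le_one₀ φ₁.le_one (sub_nonneg.2 φ₂.le_one) (sub_le_self _ φ₂.nonneg),
    fun x hx => ?_, fun x hx => ?_, fun x => (hL x).trans (le_max_left L 1)⟩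
  · by_cases h : x ∈ ball 0 4
    · have hx₂ : x ∈ ball 0 (1 / 2) := by_contra fun h₂ => hx ⟨h, h₂⟩
      have : φ₂ x = 1 := φ₂.one_of_mem_closedBall (ball_subset_closedBall hx₂)
      simp [ψ, this]
    · have : φ₁ x = 0 := φ₁.zero_of_le_dist (not_lt.1 h)
      simp [ψ, this]
  · have h₁ : φ₁ x = 1 := φ₁.one_of_mem_closedBall (ball_subset_closedBall hx.1)
    have h₂ : φ₂ x = 0 := φ₂.zero_of_le_dist (not_lt.1 hx.2)
    simp [ψ, h₁, h₂]

open scoped Pointwise in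
theorem exists_isCutoff_annulus (E : Type*) [NormedAddCommGroup E] [InnerProductSpace ℝ E]
    [FiniteDimensional ℝ E] : ∃ L : ℝ, 0 < L ∧ ∀ r : ℝ, 0 < r → ∃ η : E → ℝ,
      IsCutoff η (ball 0 (4 * r) \ ball 0 (r / 2)) (ball 0 (2 * r) \ ball 0 r) (L / r) := by
  obtain ⟨L, hL, η, hη⟩ := exists_isCutoff_ball_four_sdiff_ball_half E
  refine ⟨L, hL, fun r hr => ⟨fun x => η (r⁻¹ • x), ?_⟩⟩
  have smul_ball_eq (R : ℝ) : r • ball (0 : E) R = ball 0 (R * r) := by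
    rw [_root_.smul_ball hr.ne', smul_zero, Real.norm_of_nonneg hr.le, mul_comm]
  have := hη.comp_inv_smul hr
  rwa [Set.smul_set_sdiff₀ hr.ne', Set.smul_set_sdiff₀ hr.ne', smul_ball_eq, smul_ball_eq,
    smul_ball_eq, smul_ball_eq, one_mul, one_div_mul_eq_div] at this

end Cutoff

theorem continuous_pd {f : E3 → ℝ} (hf : ContDiff ℝ 1 f) (i : Fin 3) : Continuous (pd i f) :=
  (hf.continuous_fderiv one_ne_zero).clm_apply continuous_const

theorem fderiv_apply_eq_sum_pd (f : E3 → ℝ) (x y : E3) :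
    fderiv ℝ f x y = ∑ i, y i * pd i f x := by
  conv_lhs => rw [← (EuclideanSpace.basisFun (Fin 3) ℝ).sum_repr y]
  simp [pd]

theorem norm_fderiv_sq (f : E3 → ℝ) (x : E3) : ‖fderiv ℝ f x‖ ^ 2 = ∑ i, pd i f x ^ 2 := by
  rw [← (InnerProductSpace.toDual ℝ E3).symm.norm_map,
    ← (EuclideanSpace.basisFun (Fin 3) ℝ).sum_sq_norm_inner_left]
  simp [pd]

theorem integral_vdiv_mul {G : E3 → E3} {h : E3 → ℝ} (hG : ContDiff ℝ 1 G)
    (hh : ContDiff ℝ 1 h) (hs : HasCompactSupport h) :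
    ∫ x, vdiv G x * h x = -∫ x, fderiv ℝ h x (G x) := by
  have hGi (i : Fin 3) : ContDiff ℝ 1 fun x => G x i := contDiff_euclidean.1 hG i
  have int_pd_mul (i : Fin 3) : Integrable fun x => pd i (fun y => G y i) x * h x :=
    ((continuous_pd (hGi i) i).mul hh.continuous).integrable_of_hasCompactSupport hs.mul_left
  have int_mul_pd (i : Fin 3) : Integrable fun x => G x i * pd i h x :=
    ((hGi i).continuous.mul (continuous_pd hh i)).integrable_of_hasCompactSupport
      (hs.fderiv_apply ℝ _).mul_left
  have int_mul (i : Fin 3) : Integrable fun x => G x i * h x :=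
    ((hGi i).continuous.mul hh.continuous).integrable_of_hasCompactSupport hs.mul_left
  simp_rw [vdiv, fderiv_apply_eq_sum_pd, Finset.sum_mul]
  rw [integral_finsetSum _ fun i _ => int_pd_mul i, integral_finsetSum _ fun i _ => int_mul_pd i,
    ← Finset.sum_neg_distrib]
  refine Finset.sum_congr rfl fun i _ => neg_eq_iff_eq_neg.1 ?_
  exact (integral_mul_fderiv_eq_neg_fderiv_mul_of_integrable (int_pd_mul i) (int_mul_pd i)
    (int_mul i) (fun x _ => (hGi i).differentiable one_ne_zero x)
    fun x _ => hh.differentiable one_ne_zero x).symm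

theorem IsCutoff.setIntegral_vdiv_mul {A B : Set E3} {η φ : E3 → ℝ} {G : E3 → E3} {δ : ℝ}
    (hη : IsCutoff η A B δ) (hA : Bornology.IsBounded A) (hG : ContDiff ℝ 1 G)
    (hφ : ContDiff ℝ 1 φ) (n : ℕ) :
    ∫ x in A, vdiv G x * (φ x * η x ^ (n + 2)) =
      -∫ x in A, (η x ^ (n + 2) * fderiv ℝ φ x (G x) +
        (n + 2) * (φ x * η x ^ (n + 1) * fderiv ℝ η x (G x))) := by
  rw [setIntegral_eq_integral_of_forall_compl_eq_zero fun x hx => by simp [hη.eq_zero x hx],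
    setIntegral_eq_integral_of_forall_compl_eq_zero fun x hx => by simp [hη.eq_zero x hx],
    integral_vdiv_mul hG (hφ.mul (hη.contDiff.pow _))
      (hη.hasCompactSupport_mul_pow hA φ (by omega))]
  congr 2 with x
  rw [fderiv_mul_pow_apply (hφ.differentiable one_ne_zero x)
    (hη.contDiff.differentiable one_ne_zero x)]
  push_cast
  rfl

namespace IsCutoff

variable {A B : Set E3} {η f : E3 → ℝ} {G : E3 → E3} {δ : ℝ}

theorem setIntegral_vdiv_mul_le {φ : E3 → ℝ} (hη : IsCutoff η A B δ)
    (hA : Bornology.IsBounded A) (hG : ContDiff ℝ 1 G) (hφ : ContDiff ℝ 1 φ) (n : ℕ) :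
    ∫ x in A, vdiv G x * (φ x * η x ^ (n + 2)) ≤
      ∫ x in A, (η x ^ (n + 2) * (‖fderiv ℝ φ x‖ * ‖G x‖) +
        (n + 2) * (|φ x| * η x ^ (n + 1) * (δ * ‖G x‖))) := by
  have := hη.contDiff.continuous
  have := hη.contDiff.continuous_fderiv one_ne_zero
  have := hφ.continuous
  have := hφ.continuous_fderiv one_ne_zero
  have := hG.continuous
  rw [hη.setIntegral_vdiv_mul hA hG hφ, ← integral_neg]
  refine integral_mono (integrableOn_of_continuous_of_isBounded (by fun_prop) hA)
    (integrableOn_of_continuous_of_isBounded (by fun_prop) hA) fun x => ?_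
  have hx := hη.nonneg x
  have neg_dφ_le : -fderiv ℝ φ x (G x) ≤ ‖fderiv ℝ φ x‖ * ‖G x‖ :=
    (neg_le_abs _).trans ((fderiv ℝ φ x).le_opNorm _)
  have neg_mul_dη_le : -(φ x * fderiv ℝ η x (G x)) ≤ |φ x| * (δ * ‖G x‖) := by
    refine (neg_le_abs _).trans ((abs_mul _ _).trans_le ?_)
    gcongr
    exact (fderiv ℝ η x).le_of_opNorm_le (hη.norm_fderiv_le x) _
  calc -(η x ^ (n + 2) * fderiv ℝ φ x (G x) +
        (n + 2) * (φ x * η x ^ (n + 1) * fderiv ℝ η x (G x)))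
      = η x ^ (n + 2) * -fderiv ℝ φ x (G x) +
        (n + 2) * (η x ^ (n + 1) * -(φ x * fderiv ℝ η x (G x))) := by ring
    _ ≤ η x ^ (n + 2) * (‖fderiv ℝ φ x‖ * ‖G x‖) +
        (n + 2) * (η x ^ (n + 1) * (|φ x| * (δ * ‖G x‖))) := by gcongr
    _ = _ := by ring

theorem setIntegral_mul_sq_le (hη : IsCutoff η A B δ) (hA : Bornology.IsBounded A)
    (hδ : 0 < δ) (hG : ContDiff ℝ 1 G) (hf : ContDiff ℝ 1 f) (hGf : ∀ x, vdiv G x = f x) :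
    ∫ x in A, (f x * η x) ^ 2 ≤
      (∫ x in A, ‖fderiv ℝ f x‖ ^ 2) / δ ^ 2 + 5 * (δ ^ 2 * ∫ x in A, ‖G x‖ ^ 2) := by
  have := hη.contDiff.continuous
  have := hf.continuous
  have := hf.continuous_fderiv one_ne_zero
  have := hG.continuous
  have integrable {k : E3 → ℝ} (hk : Continuous k) : IntegrableOn k A volume :=
    integrableOn_of_continuous_of_isBounded hk hA
  have tested := hη.setIntegral_vdiv_mul_le hA hG hf 0
  simp only [hGf, CharP.cast_eq_zero, zero_add, pow_one] at tested
  have absorbed : ∫ x in A, (f x * η x) ^ 2 ≤ 1 / 2 * (∫ x in A, (f x * η x) ^ 2) +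
      ((∫ x in A, ‖fderiv ℝ f x‖ ^ 2) / (2 * δ ^ 2) +
        5 / 2 * (δ ^ 2 * ∫ x in A, ‖G x‖ ^ 2)) := by
    calc ∫ x in A, (f x * η x) ^ 2 = ∫ x in A, f x * (f x * η x ^ 2) := by
          congr with x; ring
      _ ≤ _ := tested
      _ ≤ ∫ x in A, (1 / 2 * (f x * η x) ^ 2 + (‖fderiv ℝ f x‖ ^ 2 / (2 * δ ^ 2) +
            5 / 2 * (δ ^ 2 * ‖G x‖ ^ 2))) := by
          refine integral_mono (integrable (by fun_prop)) (integrable (by fun_prop)) fun x => ?_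
          have abs_sq : (f x * η x) ^ 2 = (|f x| * η x) ^ 2 := by rw [mul_pow, mul_pow, sq_abs]
          rw [abs_sq]
          exact mul_mul_add_two_mul_le (pow_le_one₀ (hη.nonneg x) (hη.le_one x))
            (norm_nonneg _) (norm_nonneg _) hδ
      _ = _ := by
          rw [integral_add, integral_add, integral_const_mul, integral_const_mul,
            integral_const_mul, integral_div] <;> exact integrable (by fun_prop)
  have : (∫ x in A, ‖fderiv ℝ f x‖ ^ 2) / δ ^ 2 =
      2 * ((∫ x in A, ‖fderiv ℝ f x‖ ^ 2) / (2 * δ ^ 2)) := by field_simp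
  linarith

theorem norm_fderiv_mul_sq_sq_le (hη : IsCutoff η A B δ) (hf : ContDiff ℝ 1 f) (x : E3) :
    ‖fderiv ℝ (fun x => f x * η x ^ 2) x‖ ^ 2 ≤
      2 * ‖fderiv ℝ f x‖ ^ 2 + 8 * δ ^ 2 * (f x * η x) ^ 2 := by
  have hx := hη.nonneg x
  have norm_le : ‖fderiv ℝ (fun x => f x * η x ^ 2) x‖ ≤
      ‖fderiv ℝ f x‖ + 2 * (|f x * η x| * δ) := by
    have hδ : 0 ≤ δ := (norm_nonneg _).trans (hη.norm_fderiv_le x)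
    refine ContinuousLinearMap.opNorm_le_bound _ (by positivity) fun y => ?_
    rw [fderiv_mul_pow_apply (hf.differentiable one_ne_zero x)
      (hη.contDiff.differentiable one_ne_zero x)]
    calc ‖η x ^ 2 * fderiv ℝ f x y + (2 : ℕ) * (f x * η x ^ (2 - 1) * fderiv ℝ η x y)‖
        ≤ η x ^ 2 * ‖fderiv ℝ f x y‖ + 2 * (|f x * η x| * ‖fderiv ℝ η x y‖) := by
          refine (norm_add_le _ _).trans_eq ?_
          simp [abs_of_nonneg hx]
      _ ≤ 1 * (‖fderiv ℝ f x‖ * ‖y‖) + 2 * (|f x * η x| * (δ * ‖y‖)) := by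
          gcongr
          · exact pow_le_one₀ hx (hη.le_one x)
          · exact (fderiv ℝ f x).le_opNorm y
          · exact (fderiv ℝ η x).le_of_opNorm_le (hη.norm_fderiv_le x) y
      _ = _ := by ring
  calc _ ≤ (‖fderiv ℝ f x‖ + 2 * (|f x * η x| * δ)) ^ 2 := by gcongr
    _ ≤ 2 * (‖fderiv ℝ f x‖ ^ 2 + (2 * (|f x * η x| * δ)) ^ 2) := add_sq_le
    _ = _ := by rw [mul_pow, mul_pow, sq_abs]; ring

theorem fderiv_mul_sq_eq_zero (hη : IsCutoff η A B δ) (hf : ContDiff ℝ 1 f) {x : E3}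
    (hx : x ∉ A) : fderiv ℝ (fun x => f x * η x ^ 2) x = 0 := by
  ext y
  rw [fderiv_mul_pow_apply (hf.differentiable one_ne_zero x)
    (hη.contDiff.differentiable one_ne_zero x)]
  simp [hη.eq_zero x hx]

theorem integral_norm_fderiv_mul_sq_sq_le (hη : IsCutoff η A B δ) (hA : Bornology.IsBounded A)
    (hδ : 0 < δ) (hG : ContDiff ℝ 1 G) (hf : ContDiff ℝ 1 f) (hGf : ∀ x, vdiv G x = f x) :
    ∫ x, ‖fderiv ℝ (fun x => f x * η x ^ 2) x‖ ^ 2 ≤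
      40 * ((∫ x in A, ‖fderiv ℝ f x‖ ^ 2) + δ ^ 4 * ∫ x in A, ‖G x‖ ^ 2) := by
  have := hη.contDiff.continuous
  have := hf.continuous
  have := hf.continuous_fderiv one_ne_zero
  have := (hf.mul (hη.contDiff.pow 2)).continuous_fderiv one_ne_zero
  have integrable {k : E3 → ℝ} (hk : Continuous k) : IntegrableOn k A volume :=
    integrableOn_of_continuous_of_isBounded hk hA
  have gradient_le : ∫ x, ‖fderiv ℝ (fun x => f x * η x ^ 2) x‖ ^ 2 ≤
      2 * (∫ x in A, ‖fderiv ℝ f x‖ ^ 2) + 8 * δ ^ 2 * ∫ x in A, (f x * η x) ^ 2 := by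
    rw [← setIntegral_eq_integral_of_forall_compl_eq_zero fun x hx => by
      rw [hη.fderiv_mul_sq_eq_zero hf hx, norm_zero, zero_pow two_ne_zero]]
    refine (integral_mono (integrable (by fun_prop)) (integrable (by fun_prop))
      (hη.norm_fderiv_mul_sq_sq_le hf)).trans_eq ?_
    rw [integral_add, integral_const_mul, integral_const_mul] <;> exact integrable (by fun_prop)
  have caccioppoli : δ ^ 2 * (∫ x in A, (f x * η x) ^ 2) ≤
      (∫ x in A, ‖fderiv ℝ f x‖ ^ 2) + 5 * (δ ^ 4 * ∫ x in A, ‖G x‖ ^ 2) :=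
    (mul_le_mul_of_nonneg_left (hη.setIntegral_mul_sq_le hA hδ hG hf hGf)
      (sq_nonneg δ)).trans_eq (by field_simp)
  have : 0 ≤ ∫ x in A, ‖fderiv ℝ f x‖ ^ 2 := by positivity
  linarith

theorem exists_setIntegral_pow_six_le : ∃ S : ℝ, 1 ≤ S ∧ ∀ {A B : Set E3} {η f : E3 → ℝ}
    {G : E3 → E3} {δ : ℝ}, IsCutoff η A B δ → Bornology.IsBounded A → 0 < δ → ContDiff ℝ 1 G →
    ContDiff ℝ 1 f → (∀ x, vdiv G x = f x) → ∫ x in A, (|f x| * η x ^ 2) ^ 6 ≤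
      (S * ((∫ x in A, ‖fderiv ℝ f x‖ ^ 2) + δ ^ 4 * ∫ x in A, ‖G x‖ ^ 2)) ^ 3 := by
  obtain ⟨S, hS, sobolev⟩ := exists_integral_pow_six_le (volume : Measure E3) (by simp)
  refine ⟨1 + S * 40, le_add_of_nonneg_right (by positivity),
    fun {A B η f G δ} hη hA hδ hG hf hGf => ?_⟩
  set Q := (∫ x in A, ‖fderiv ℝ f x‖ ^ 2) + δ ^ 4 * ∫ x in A, ‖G x‖ ^ 2
  have hQ : 0 ≤ Q := by positivity
  calc ∫ x in A, (|f x| * η x ^ 2) ^ 6 = ∫ x in A, (f x * η x ^ 2) ^ 6 := by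
        simp only [mul_pow, Even.pow_abs (by decide : Even 6)]
    _ = ∫ x, (f x * η x ^ 2) ^ 6 :=
        setIntegral_eq_integral_of_forall_compl_eq_zero fun x hx => by simp [hη.eq_zero x hx]
    _ ≤ (S * ∫ x, ‖fderiv ℝ (fun x => f x * η x ^ 2) x‖ ^ 2) ^ 3 :=
        sobolev _ (hf.mul (hη.contDiff.pow 2)) (hη.hasCompactSupport_mul_pow hA f two_ne_zero)
    _ ≤ (S * (40 * Q)) ^ 3 := by
        gcongr
        exact hη.integral_norm_fderiv_mul_sq_sq_le hA hδ hG hf hGf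
    _ ≤ ((1 + S * 40) * Q) ^ 3 := by
        gcongr ?_ ^ 3
        linarith

theorem setIntegral_cube_le (hη : IsCutoff η A B δ) (hA : Bornology.IsBounded A)
    (hG : ContDiff ℝ 1 G) (hf : ContDiff ℝ 1 f) (hGf : ∀ x, vdiv G x = f x) :
    ∫ x in A, (|f x| * η x ^ 2) ^ 3 ≤
      ∫ x in A, (2 * (‖G x‖ * ‖fderiv ℝ f x‖ * (|f x| * η x ^ 2)) +
        6 * δ * ‖G x‖ * (|f x| * η x ^ 2) ^ 2) := by
  have := hη.contDiff.continuous
  have := hf.continuous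
  have := hf.continuous_fderiv one_ne_zero
  have := hG.continuous
  have hφ : ContDiff ℝ 1 fun x => f x * |f x| := contDiff_mul_abs.comp hf
  have := hφ.continuous_fderiv one_ne_zero
  calc ∫ x in A, (|f x| * η x ^ 2) ^ 3 = ∫ x in A, vdiv G x * (f x * |f x| * η x ^ (4 + 2)) := by
        congr with x
        rw [hGf, ← mul_assoc, ← mul_assoc, ← abs_mul_abs_self (f x)]
        ring
    _ ≤ _ := hη.setIntegral_vdiv_mul_le hA hG hφ 4
    _ ≤ _ := by
        refine integral_mono (integrableOn_of_continuous_of_isBounded (by fun_prop) hA)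
          (integrableOn_of_continuous_of_isBounded (by fun_prop) hA) fun x => ?_
        have hx := hη.nonneg x
        have hδ : 0 ≤ δ := (norm_nonneg _).trans (hη.norm_fderiv_le x)
        have pow_le {m n : ℕ} (hmn : m ≤ n) : η x ^ n ≤ η x ^ m :=
          pow_le_pow_of_le_one hx (hη.le_one x) hmn
        rw [norm_fderiv_mul_abs (hf.differentiable one_ne_zero x), abs_mul, abs_abs]
        calc η x ^ (4 + 2) * (2 * |f x| * ‖fderiv ℝ f x‖ * ‖G x‖) +
              ((4 : ℕ) + 2) * (|f x| * |f x| * η x ^ (4 + 1) * (δ * ‖G x‖))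
            ≤ η x ^ 2 * (2 * |f x| * ‖fderiv ℝ f x‖ * ‖G x‖) +
              ((4 : ℕ) + 2) * (|f x| * |f x| * η x ^ 4 * (δ * ‖G x‖)) := by
              gcongr ?_ * _ + _ * (_ * ?_ * _) <;> exact pow_le (by norm_num)
          _ = _ := by push_cast; ring

theorem setIntegral_cube_le_rpow {s κ N : ℝ} (hη : IsCutoff η A B δ)
    (hA : Bornology.IsBounded A) (hδ : 0 ≤ δ) (hG : ContDiff ℝ 1 G) (hf : ContDiff ℝ 1 f)
    (hGf : ∀ x, vdiv G x = f x) (hs3 : 3 ≤ s) (hs6 : s ≤ 6) (hN : 0 < N) (hκ : 0 < κ)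
    (hGs : ∫ x in A, ‖G x‖ ^ s ≤ N ^ 3) (hD : ∫ x in A, ‖fderiv ℝ f x‖ ^ 2 ≤ κ)
    (hV : ∫ x in A, (|f x| * η x ^ 2) ^ 6 ≤ κ ^ 3) :
    ∫ x in A, (|f x| * η x ^ 2) ^ 3 ≤
      36 * (N * κ) ^ (9 / (s + 6)) + 6 ^ 6 * (δ ^ 3 * ∫ x in A, ‖G x‖ ^ 3) := by
  have := hη.contDiff.continuous
  have := hf.continuous
  have := hf.continuous_fderiv one_ne_zero
  have := hG.continuous
  have : Continuous fun x => ‖G x‖ ^ s :=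
    hG.continuous.norm.rpow_const fun x => .inr (by linarith)
  have integrable {k : E3 → ℝ} (hk : Continuous k) : IntegrableOn k A volume :=
    integrableOn_of_continuous_of_isBounded hk hA
  set T := (N * κ) ^ (9 / (s + 6))
  have pointwise (x : E3) : 2 * (‖G x‖ * ‖fderiv ℝ f x‖ * (|f x| * η x ^ 2)) +
      6 * δ * ‖G x‖ * (|f x| * η x ^ 2) ^ 2 ≤
      2 * T * (‖G x‖ ^ s / N ^ 3 + ‖fderiv ℝ f x‖ ^ 2 / κ + (|f x| * η x ^ 2) ^ 6 / κ ^ 3) +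
        (6 ^ 5 * δ ^ 3 * ‖G x‖ ^ 3 + 5 / 6 * (|f x| * η x ^ 2) ^ 3) := by
    have young := mul_mul_le_rpow_mul_add hs3 hs6 hN hκ (norm_nonneg (G x))
      (norm_nonneg (fderiv ℝ f x)) (v := |f x| * η x ^ 2) (by positivity)
    have := mul_sq_le_mul_cube_add (a := 6 * δ * ‖G x‖) (v := |f x| * η x ^ 2) (ε := 1 / 6)
      (by positivity) (by positivity) (by norm_num)
    linear_combination 2 * young + this
  have integral_le : ∫ x in A, (‖G x‖ ^ s / N ^ 3 + ‖fderiv ℝ f x‖ ^ 2 / κ +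
      (|f x| * η x ^ 2) ^ 6 / κ ^ 3) ≤ 1 + 1 + 1 := by
    rw [integral_add, integral_add, integral_div, integral_div, integral_div]
    · gcongr <;> exact div_le_one_of_le₀ (by assumption) (by positivity)
    all_goals exact integrable (by fun_prop)
  have absorbed : ∫ x in A, (|f x| * η x ^ 2) ^ 3 ≤ 2 * T * (1 + 1 + 1) +
      (6 ^ 5 * δ ^ 3 * (∫ x in A, ‖G x‖ ^ 3) + 5 / 6 * ∫ x in A, (|f x| * η x ^ 2) ^ 3) := by
    refine (hη.setIntegral_cube_le hA hG hf hGf).trans <| (integral_mono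
      (integrable (by fun_prop)) (integrable (by fun_prop)) pointwise).trans ?_
    rw [integral_add, integral_add, integral_const_mul, integral_const_mul, integral_const_mul]
    · gcongr
    all_goals exact integrable (by fun_prop)
  linarith

theorem setIntegral_abs_cube_le (hη : IsCutoff η A B δ) (hA : Bornology.IsBounded A)
    (hB : MeasurableSet B) (hf : Continuous f) :
    ∫ x in B, |f x| ^ 3 ≤ ∫ x in A, (|f x| * η x ^ 2) ^ 3 := by
  have := hη.contDiff.continuous
  calc ∫ x in B, |f x| ^ 3 = ∫ x in B, (|f x| * η x ^ 2) ^ 3 :=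
        setIntegral_congr_fun hB fun x hx => by simp [hη.eq_one x hx]
    _ ≤ _ := setIntegral_mono_set (integrableOn_of_continuous_of_isBounded (by fun_prop) hA)
        (.of_forall fun x => by have := hη.nonneg x; positivity) hη.subset.eventuallyLE

theorem exists_setIntegral_abs_cube_le_rpow {s : ℝ} (hs3 : 3 ≤ s) (hs6 : s ≤ 6) :
    ∃ S : ℝ, 1 ≤ S ∧ ∀ {A B : Set E3} {η f : E3 → ℝ} {G : E3 → E3} {δ κ N : ℝ},
    IsCutoff η A B δ → Bornology.IsBounded A → MeasurableSet B → 0 < δ → ContDiff ℝ 1 G →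
    ContDiff ℝ 1 f → (∀ x, vdiv G x = f x) → 0 < N → 0 < κ → ∫ x in A, ‖G x‖ ^ s ≤ N ^ 3 →
    S * ((∫ x in A, ‖fderiv ℝ f x‖ ^ 2) + δ ^ 4 * ∫ x in A, ‖G x‖ ^ 2) ≤ κ →
    ∫ x in B, |f x| ^ 3 ≤
      36 * (N * κ) ^ (9 / (s + 6)) + 6 ^ 6 * (δ ^ 3 * ∫ x in A, ‖G x‖ ^ 3) := by
  obtain ⟨S, hS, pow_six_le⟩ := exists_setIntegral_pow_six_le
  refine ⟨S, hS, fun {A B η f G δ κ N} hη hA hB hδ hG hf hGf hN hκ hGs hSκ => ?_⟩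
  have hG0 : 0 ≤ δ ^ 4 * ∫ x in A, ‖G x‖ ^ 2 := by positivity
  have hDκ : ∫ x in A, ‖fderiv ℝ f x‖ ^ 2 ≤ κ :=
    (le_add_of_nonneg_right hG0).trans
      ((le_mul_of_one_le_left (by positivity) hS).trans hSκ)
  have hV : ∫ x in A, (|f x| * η x ^ 2) ^ 6 ≤ κ ^ 3 :=
    (pow_six_le hη hA hδ hG hf hGf).trans (by gcongr)
  exact (hη.setIntegral_abs_cube_le hA hB hf.continuous).trans
    (hη.setIntegral_cube_le_rpow hA hδ.le hG hf hGf hs3 hs6 hN hκ hGs hDκ hV)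

end IsCutoff

theorem rpow_mul_add_sq_div_le {s c D r l : ℝ} (hs : 3 ≤ s) (hc : 0 ≤ c) (hD : 0 ≤ D)
    (hr : 0 < r) (hl : 0 < l) :
    (c * (r * l ^ (s / 3)) * (D + l ^ 2 / r)) ^ (9 / (s + 6)) ≤
      c ^ (9 / (s + 6)) * ((r * l ^ (s / 3) * D) ^ (9 / (s + 6)) + l ^ 3) := by
  have l_cube : (l ^ (s / 3 + 2)) ^ (9 / (s + 6)) = l ^ 3 := by
    rw [← Real.rpow_mul hl.le, ← Real.rpow_natCast]
    congr 1
    push_cast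
    field_simp
    ring
  calc (c * (r * l ^ (s / 3)) * (D + l ^ 2 / r)) ^ (9 / (s + 6))
      = (c * (r * l ^ (s / 3) * D + l ^ (s / 3 + 2))) ^ (9 / (s + 6)) := by
        rw [Real.rpow_add hl, Real.rpow_two]
        congr 1
        field_simp
    _ = c ^ (9 / (s + 6)) * (r * l ^ (s / 3) * D + l ^ (s / 3 + 2)) ^ (9 / (s + 6)) :=
        Real.mul_rpow hc (by positivity)
    _ ≤ c ^ (9 / (s + 6)) *
          ((r * l ^ (s / 3) * D) ^ (9 / (s + 6)) + (l ^ (s / 3 + 2)) ^ (9 / (s + 6))) := by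
        gcongr
        exact Real.rpow_add_le_add_rpow (by positivity) (by positivity) (by positivity)
          ((div_le_one₀ (by linarith)).2 (by linarith))
    _ = _ := by rw [l_cube]

theorem add_div_pow_four_mul_le {D I L m r l : ℝ} (hD : 0 ≤ D) (hm : 0 ≤ m) (hr : 0 < r)
    (hI : I ≤ m * (r ^ 3 * l ^ 2)) :
    D + (L / r) ^ 4 * I ≤ (1 + m * L ^ 4) * (D + l ^ 2 / r) := by
  have : 0 ≤ m * L ^ 4 * D := by positivity
  have : 0 ≤ l ^ 2 / r := by positivity
  calc D + (L / r) ^ 4 * I ≤ D + (L / r) ^ 4 * (m * (r ^ 3 * l ^ 2)) := by gcongr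
    _ = D + m * L ^ 4 * (l ^ 2 / r) := by field_simp
    _ ≤ (1 + m * L ^ 4) * (D + l ^ 2 / r) := by linarith

theorem setIntegral_norm_pow_le_of_setIntegral_norm_rpow_le {E F : Type*}
    [NormedAddCommGroup E] [ProperSpace E] [MeasurableSpace E] [OpensMeasurableSpace E]
    {μ : Measure E} [IsFiniteMeasureOnCompacts μ] [NormedAddCommGroup F] {A : Set E} {G : E → F}
    {m M V l s : ℝ} {n : ℕ} (hA : Bornology.IsBounded A) (hG : Continuous G) (hl : 0 < l)
    (hns : n ≤ s) (hμ : μ.real A ≤ m * V) (hs : ∫ x in A, ‖G x‖ ^ s ∂μ ≤ M * (V * l ^ s)) :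
    ∫ x in A, ‖G x‖ ^ n ∂μ ≤ (m + M) * (V * l ^ n) := by
  have : IsFiniteMeasure (μ.restrict A) := ⟨by simpa using hA.measure_lt_top⟩
  have hs0 : 0 ≤ s := n.cast_nonneg.trans hns
  have int_rpow : IntegrableOn (fun x => ‖G x‖ ^ s) A μ :=
    integrableOn_of_continuous_of_isBounded (hG.norm.rpow_const fun _ => .inr hs0) hA
  simpa only [Real.rpow_natCast] using integral_rpow_le_of_integral_rpow_le
    (fun x => norm_nonneg (G x)) hl n.cast_nonneg hns int_rpow (by simpa using hμ) hs

theorem exists_setIntegral_abs_cube_le_of_vdiv_eq {s L M : ℝ} (hs3 : 3 ≤ s) (hs6 : s ≤ 6)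
    (hL : 0 < L) (hM : 1 ≤ M) : ∃ C : ℝ, 0 < C ∧ ∀ {A B : Set E3} {η f : E3 → ℝ} {G : E3 → E3}
    {r l : ℝ}, 0 < r → 0 < l → IsCutoff η A B (L / r) → Bornology.IsBounded A →
    MeasurableSet B → volume.real A ≤ M * r ^ 3 → ContDiff ℝ 1 G → ContDiff ℝ 1 f →
    (∀ x, vdiv G x = f x) → ∫ x in A, ‖G x‖ ^ s ≤ M * (r ^ 3 * l ^ s) →
    ∫ x in B, |f x| ^ 3 ≤
      C * ((r * l ^ (s / 3) * ∫ x in A, ‖fderiv ℝ f x‖ ^ 2) ^ (9 / (s + 6)) + l ^ 3) := by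
  obtain ⟨S, hS, cube_le⟩ := IsCutoff.exists_setIntegral_abs_cube_le_rpow hs3 hs6
  set K := S * (1 + (M + M) * L ^ 4)
  refine ⟨36 * (M * K) ^ (9 / (s + 6)) + 6 ^ 6 * ((M + M) * L ^ 3), by positivity,
    fun {A B η f G r l} hr hl hη hA hB hAvol hG hf hGf hGs => ?_⟩
  have norm_pow_le {n : ℕ} (hn : n ≤ s) : ∫ x in A, ‖G x‖ ^ n ≤ (M + M) * (r ^ 3 * l ^ n) :=
    setIntegral_norm_pow_le_of_setIntegral_norm_rpow_le hA hG.continuous hl hn hAvol hGs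
  set D := ∫ x in A, ‖fderiv ℝ f x‖ ^ 2
  have hD : 0 ≤ D := by positivity
  have hN : ∫ x in A, ‖G x‖ ^ s ≤ (M * (r * l ^ (s / 3))) ^ 3 := by
    have l_pow : (l ^ (s / 3)) ^ 3 = l ^ s := by
      rw [← Real.rpow_mul_natCast hl.le, Nat.cast_ofNat, div_mul_cancel₀ s three_ne_zero]
    rw [mul_pow, mul_pow, l_pow]
    exact hGs.trans (by gcongr; exact le_self_pow₀ hM three_ne_zero)
  have hκ : S * (D + (L / r) ^ 4 * ∫ x in A, ‖G x‖ ^ 2) ≤ K * (D + l ^ 2 / r) := by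
    rw [mul_assoc S]
    gcongr
    exact add_div_pow_four_mul_le hD (by positivity) hr (norm_pow_le (le_trans (by norm_num) hs3))
  have main_term : (M * (r * l ^ (s / 3)) * (K * (D + l ^ 2 / r))) ^ (9 / (s + 6)) ≤
      (M * K) ^ (9 / (s + 6)) * ((r * l ^ (s / 3) * D) ^ (9 / (s + 6)) + l ^ 3) := by
    rw [mul_mul_mul_comm, ← mul_assoc]
    exact rpow_mul_add_sq_div_le hs3 (by positivity) hD hr hl
  have cutoff_term : (L / r) ^ 3 * ∫ x in A, ‖G x‖ ^ 3 ≤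
      (M + M) * L ^ 3 * ((r * l ^ (s / 3) * D) ^ (9 / (s + 6)) + l ^ 3) := by
    calc (L / r) ^ 3 * ∫ x in A, ‖G x‖ ^ 3
        ≤ (L / r) ^ 3 * ((M + M) * (r ^ 3 * l ^ 3)) := by
          gcongr
          exact norm_pow_le (mod_cast hs3)
      _ = (M + M) * L ^ 3 * l ^ 3 := by field_simp
      _ ≤ _ := by
          gcongr
          exact le_add_of_nonneg_left (by positivity)
  refine (cube_le hη hA hB (by positivity) hG hf hGf (by positivity) (by positivity) hN
    hκ).trans ?_
  linear_combination 36 * main_term + 6 ^ 6 * cutoff_term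

/-- `Φ` is a matrix potential of the vector field `v`, that is, `div Φ = v`; both are of class
`C¹`. -/
structure IsPotential (Φ : E3 → Fin 3 → Fin 3 → ℝ) (v : E3 → E3) : Prop where
  contDiff_field : ContDiff ℝ 1 v
  contDiff : ∀ i j, ContDiff ℝ 1 fun x => Φ x i j
  mdiv_eq : ∀ x j, mdiv Φ x j = v x j

/-- The `j`-th column of `Φ - Φ_{B_R}`, whose divergence is the `j`-th component of `div Φ`. -/
def oscColumn (Φ : E3 → Fin 3 → Fin 3 → ℝ) (R : ℝ) (j : Fin 3) (x : E3) : E3 :=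
  WithLp.toLp 2 fun i => Φ x i j - mavg Φ R i j

section Oscillation

variable {Φ : E3 → Fin 3 → Fin 3 → ℝ} {s R : ℝ}

theorem vdiv_oscColumn (Φ : E3 → Fin 3 → Fin 3 → ℝ) (R : ℝ) (j : Fin 3) (x : E3) :
    vdiv (oscColumn Φ R j) x = mdiv Φ x j := by
  simp only [vdiv, mdiv, pd, oscColumn, fderiv_sub_const]

theorem contDiff_oscColumn (hΦ : ∀ i j, ContDiff ℝ 1 fun x => Φ x i j) (R : ℝ) (j : Fin 3) :
    ContDiff ℝ 1 (oscColumn Φ R j) :=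
  contDiff_euclidean.2 fun i => (hΦ i j).sub contDiff_const

theorem norm_oscColumn_le_frob (Φ : E3 → Fin 3 → Fin 3 → ℝ) (R : ℝ) (j : Fin 3) (x : E3) :
    ‖oscColumn Φ R j x‖ ≤ frob fun i j => Φ x i j - mavg Φ R i j := by
  rw [EuclideanSpace.norm_eq]
  refine Real.sqrt_le_sqrt (Finset.sum_le_sum fun i _ => ?_)
  rw [Real.norm_eq_abs, sq_abs]
  exact Finset.single_le_sum (f := fun j => (Φ x i j - mavg Φ R i j) ^ 2)
    (fun j _ => sq_nonneg _) (Finset.mem_univ j)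

theorem volume_real_ball3 (hR : 0 ≤ R) : volume.real (ball3 R) = π * 4 / 3 * R ^ 3 := by
  rw [measureReal_def, ball3, EuclideanSpace.volume_ball_fin_three, ← ENNReal.ofReal_pow hR,
    ← ENNReal.ofReal_mul (by positivity), ENNReal.toReal_ofReal (by positivity), mul_comm]

theorem meanOsc_nonneg (Φ : E3 → Fin 3 → Fin 3 → ℝ) (s R : ℝ) : 0 ≤ meanOsc Φ s R :=
  Real.rpow_nonneg (mul_nonneg (by positivity)
    (integral_nonneg fun _ => Real.rpow_nonneg (Real.sqrt_nonneg _) _)) _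

theorem setIntegral_frob_rpow_eq (hs : s ≠ 0) (hR : 0 < R) :
    ∫ x in ball3 R, (frob fun i j => Φ x i j - mavg Φ R i j) ^ s =
      volume.real (ball3 R) * meanOsc Φ s R ^ s := by
  have hvol : volume.real (ball3 R) ≠ 0 := by rw [volume_real_ball3 hR.le]; positivity
  have mean_nonneg : 0 ≤ (volume.real (ball3 R))⁻¹ *
      ∫ x in ball3 R, (frob fun i j => Φ x i j - mavg Φ R i j) ^ s :=
    mul_nonneg (by positivity)
      (integral_nonneg fun _ => Real.rpow_nonneg (Real.sqrt_nonneg _) _)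
  rw [meanOsc, ← measureReal_def, one_div, Real.rpow_inv_rpow mean_nonneg hs,
    mul_inv_cancel_left₀ hvol]

theorem setIntegral_norm_oscColumn_rpow_le (hΦ : ∀ i j, ContDiff ℝ 1 fun x => Φ x i j)
    (hs : 0 < s) (hR : 0 < R) (j : Fin 3) {A : Set E3} (hA : A ⊆ ball3 R) :
    ∫ x in A, ‖oscColumn Φ R j x‖ ^ s ≤ volume.real (ball3 R) * meanOsc Φ s R ^ s := by
  have hcont (i j : Fin 3) := (hΦ i j).continuous
  have int_frob : IntegrableOn (fun x => (frob fun i j => Φ x i j - mavg Φ R i j) ^ s)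
      (ball3 R) volume :=
    integrableOn_of_continuous_of_isBounded
      (.rpow_const (by unfold frob; fun_prop) fun _ => .inr hs.le) isBounded_ball
  calc ∫ x in A, ‖oscColumn Φ R j x‖ ^ s
      ≤ ∫ x in A, (frob fun i j => Φ x i j - mavg Φ R i j) ^ s :=
        integral_mono_of_nonneg (.of_forall fun x => by positivity) (int_frob.mono_set hA)
          (.of_forall fun x => Real.rpow_le_rpow (norm_nonneg _)
            (norm_oscColumn_le_frob Φ R j x) hs.le)
    _ ≤ ∫ x in ball3 R, (frob fun i j => Φ x i j - mavg Φ R i j) ^ s :=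
        setIntegral_mono_set int_frob
          (.of_forall fun _ => Real.rpow_nonneg (Real.sqrt_nonneg _) _) hA.eventuallyLE
    _ = _ := setIntegral_frob_rpow_eq hs.ne' hR

end Oscillation

theorem norm_fderiv_sq_le_gradSq (v : E3 → E3) (j : Fin 3) (x : E3) :
    ‖fderiv ℝ (fun y => v y j) x‖ ^ 2 ≤ gradSq v x := by
  rw [norm_fderiv_sq]
  exact Finset.single_le_sum (f := fun j => ∑ i, pd i (fun y => v y j) x ^ 2)
    (fun j _ => Finset.sum_nonneg fun i _ => sq_nonneg _) (Finset.mem_univ j)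

theorem gradSq_nonneg (v : E3 → E3) (x : E3) : 0 ≤ gradSq v x :=
  (sq_nonneg _).trans (norm_fderiv_sq_le_gradSq v 0 x)

theorem continuous_gradSq {v : E3 → E3} (hv : ContDiff ℝ 1 v) : Continuous (gradSq v) :=
  continuous_finsetSum _ fun j _ => continuous_finsetSum _ fun i _ =>
    (continuous_pd (contDiff_euclidean.1 hv j) i).pow 2

section Annulus

variable {s : ℝ}

theorem exists_setIntegral_abs_component_cube_le (hs3 : 3 ≤ s) (hs6 : s ≤ 6) :
    ∃ C : ℝ, 0 < C ∧ ∀ {Φ : E3 → Fin 3 → Fin 3 → ℝ} {v : E3 → E3} {r l : ℝ} (j : Fin 3),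
    IsPotential Φ v → 0 < r → 0 < l → meanOsc Φ s (4 * r) ≤ l →
    ∫ x in ball3 (2 * r) \ ball3 r, |v x j| ^ 3 ≤
      C * ((r * l ^ (s / 3) * ∫ x in ball3 (4 * r) \ ball3 (r / 2), gradSq v x)
        ^ (9 / (s + 6)) + l ^ 3) := by
  obtain ⟨L, hL, cutoff⟩ := exists_isCutoff_annulus E3
  have one_le : 1 ≤ π * 4 / 3 * 4 ^ 3 := by linarith [Real.pi_gt_three]
  obtain ⟨C, hC, cube_le⟩ := exists_setIntegral_abs_cube_le_of_vdiv_eq hs3 hs6 hL one_le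
  refine ⟨C, hC, fun {Φ v r l} j hΦv hr hl hosc => ?_⟩
  obtain ⟨η, hη⟩ := cutoff r hr
  set A := ball3 (4 * r) \ ball3 (r / 2)
  have hA : Bornology.IsBounded A := isBounded_ball.subset Set.sdiff_subset
  have volume_ball : volume.real (ball3 (4 * r)) = π * 4 / 3 * 4 ^ 3 * r ^ 3 := by
    rw [volume_real_ball3 (by positivity), mul_pow, mul_assoc _ (4 ^ 3)]
  have volume_le : volume.real A ≤ π * 4 / 3 * 4 ^ 3 * r ^ 3 :=
    (measureReal_mono Set.sdiff_subset measure_ball_lt_top.ne).trans_eq volume_ball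
  have hGs : ∫ x in A, ‖oscColumn Φ (4 * r) j x‖ ^ s ≤
      π * 4 / 3 * 4 ^ 3 * (r ^ 3 * l ^ s) := by
    refine (setIntegral_norm_oscColumn_rpow_le hΦv.contDiff (by linarith) (by positivity) j
      Set.sdiff_subset).trans ?_
    have := meanOsc_nonneg Φ s (4 * r)
    rw [volume_ball, mul_assoc _ (r ^ 3)]
    gcongr
  have fderiv_le : ∫ x in A, ‖fderiv ℝ (fun y => v y j) x‖ ^ 2 ≤ ∫ x in A, gradSq v x :=
    integral_mono_of_nonneg (.of_forall fun x => by positivity)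
      (integrableOn_of_continuous_of_isBounded (continuous_gradSq hΦv.contDiff_field) hA)
      (.of_forall (norm_fderiv_sq_le_gradSq v j))
  refine (cube_le hr hl hη hA (measurableSet_ball.diff measurableSet_ball) volume_le
    (contDiff_oscColumn hΦv.contDiff (4 * r) j) (contDiff_euclidean.1 hΦv.contDiff_field j)
    (fun x => (vdiv_oscColumn Φ _ j x).trans (hΦv.mdiv_eq x j)) hGs).trans ?_
  gcongr
  exact fderiv_le

theorem exists_setIntegral_norm_cube_le (hs3 : 3 ≤ s) (hs6 : s ≤ 6) :
    ∃ C : ℝ, 0 < C ∧ ∀ {Φ : E3 → Fin 3 → Fin 3 → ℝ} {v : E3 → E3} {r l : ℝ},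
    IsPotential Φ v → 0 < r → 0 < l → meanOsc Φ s (4 * r) ≤ l →
    ∫ x in ball3 (2 * r) \ ball3 r, ‖v x‖ ^ 3 ≤
      C * ((r * l ^ (s / 3) * ∫ x in ball3 (4 * r) \ ball3 (r / 2), gradSq v x)
        ^ (9 / (s + 6)) + l ^ 3) := by
  obtain ⟨C, hC, component_le⟩ := exists_setIntegral_abs_component_cube_le hs3 hs6
  refine ⟨3 ^ 2 * (3 * C), by positivity, fun {Φ v r l} hΦv hr hl hosc => ?_⟩
  have hcont := hΦv.contDiff_field.continuous
  have integrable {k : E3 → ℝ} (hk : Continuous k) :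
      IntegrableOn k (ball3 (2 * r) \ ball3 r) volume :=
    integrableOn_of_continuous_of_isBounded hk (isBounded_ball.subset Set.sdiff_subset)
  calc ∫ x in ball3 (2 * r) \ ball3 r, ‖v x‖ ^ 3
      ≤ ∫ x in ball3 (2 * r) \ ball3 r, 3 ^ 2 * ∑ j, |v x j| ^ 3 :=
        integral_mono (integrable (by fun_prop)) (integrable (by fun_prop)) fun x => by
          simpa using norm_pow_succ_le_card_pow_mul_sum (v x) 2
    _ = 3 ^ 2 * ∑ j, ∫ x in ball3 (2 * r) \ ball3 r, |v x j| ^ 3 := by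
        rw [integral_const_mul, integral_finsetSum _ fun j _ => integrable (by fun_prop)]
    _ ≤ 3 ^ 2 * ∑ _j : Fin 3, C * ((r * l ^ (s / 3) *
          ∫ x in ball3 (4 * r) \ ball3 (r / 2), gradSq v x) ^ (9 / (s + 6)) + l ^ 3) := by
        gcongr with j
        exact component_le j hΦv hr hl hosc
    _ = _ := by
        rw [Finset.sum_const, Finset.card_fin, nsmul_eq_mul]
        push_cast
        ring

theorem rpow_mul_rpow_growth_eq {c r D : ℝ} (hs : 0 < s) (hc : 0 ≤ c) (hr : 0 < r)
    (hD : 0 ≤ D) : (r * (c * r ^ ((1 : ℝ) / 3 - 1 / s)) ^ (s / 3) * D) ^ (9 / (s + 6)) =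
      c ^ (3 * s / (s + 6)) * (r * (D ^ ((1 : ℝ) / 2)) ^ (18 / (s + 6))) := by
  rw [Real.mul_rpow (by positivity) hD, Real.mul_rpow hr.le (by positivity),
    Real.mul_rpow hc (by positivity), Real.mul_rpow (by positivity) (by positivity),
    ← Real.rpow_mul hr.le, ← Real.rpow_mul hr.le, ← Real.rpow_mul hc, ← Real.rpow_mul hD,
    mul_left_comm, ← Real.rpow_add hr, mul_assoc]
  have hc_exp : s / 3 * (9 / (s + 6)) = 3 * s / (s + 6) := by field_simp; ring
  have hr_exp : 9 / (s + 6) + ((1 : ℝ) / 3 - 1 / s) * (s / 3) * (9 / (s + 6)) = 1 := by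
    field_simp; ring
  have hD_exp : (1 : ℝ) / 2 * (18 / (s + 6)) = 9 / (s + 6) := by ring
  rw [hc_exp, hr_exp, Real.rpow_one, hD_exp]

theorem rpow_growth_cube_eq {c r : ℝ} (hr : 0 < r) :
    (c * r ^ ((1 : ℝ) / 3 - 1 / s)) ^ 3 = c ^ 3 * (r * r ^ (-(3 / s))) := by
  have hr_exp : ((1 : ℝ) / 3 - 1 / s) * (3 : ℕ) = 1 + -(3 / s) := by push_cast; ring
  rw [mul_pow, ← Real.rpow_mul_natCast hr.le, hr_exp, Real.rpow_add hr, Real.rpow_one]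

theorem exists_inv_mul_setIntegral_norm_cube_le (hs3 : 3 ≤ s) (hs6 : s ≤ 6) {C₀ : ℝ}
    (hC₀ : 0 < C₀) : ∃ C : ℝ, 0 < C ∧ ∀ {Φ : E3 → Fin 3 → Fin 3 → ℝ} {v : E3 → E3} {r : ℝ},
    IsPotential Φ v → 0 < r → meanOsc Φ s (4 * r) ≤ C₀ * (4 * r) ^ ((1 : ℝ) / 3 - 1 / s) →
    r⁻¹ * ∫ x in ball3 (2 * r) \ ball3 r, ‖v x‖ ^ 3 ≤
      C * (((∫ x in ball3 (4 * r) \ ball3 (r / 2), gradSq v x) ^ ((1 : ℝ) / 2))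
        ^ (18 / (s + 6)) + r ^ (-(3 / s))) := by
  obtain ⟨C, hC, norm_cube_le⟩ := exists_setIntegral_norm_cube_le hs3 hs6
  set c := C₀ * 4 ^ ((1 : ℝ) / 3 - 1 / s)
  refine ⟨C * (c ^ (3 * s / (s + 6)) + c ^ 3), by positivity, fun {Φ v r} hΦv hr hosc => ?_⟩
  rw [Real.mul_rpow (by norm_num) hr.le, ← mul_assoc] at hosc
  have hD : 0 ≤ ∫ x in ball3 (4 * r) \ ball3 (r / 2), gradSq v x :=
    integral_nonneg (gradSq_nonneg v)
  have := norm_cube_le hΦv hr (by positivity) hosc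
  rw [rpow_mul_rpow_growth_eq (by linarith) (by positivity) hr hD, rpow_growth_cube_eq hr] at this
  set X := ((∫ x in ball3 (4 * r) \ ball3 (r / 2), gradSq v x) ^ ((1 : ℝ) / 2)) ^ (18 / (s + 6))
  have : 0 ≤ X := by positivity
  calc r⁻¹ * ∫ x in ball3 (2 * r) \ ball3 r, ‖v x‖ ^ 3
      ≤ r⁻¹ * (C * (c ^ (3 * s / (s + 6)) * (r * X) + c ^ 3 * (r * r ^ (-(3 / s))))) := by
        gcongr
    _ = C * (c ^ (3 * s / (s + 6)) * X + c ^ 3 * r ^ (-(3 / s))) := by field_simp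
    _ ≤ C * ((c ^ (3 * s / (s + 6)) + c ^ 3) * X +
          (c ^ (3 * s / (s + 6)) + c ^ 3) * r ^ (-(3 / s))) := by
        gcongr
        · exact le_add_of_nonneg_right (by positivity)
        · exact le_add_of_nonneg_left (by positivity)
    _ = _ := by ring

end Annulus

theorem annulus_cubic_estimate_general {s C₀ : ℝ} (hs3 : 3 ≤ s) (hs6 : s ≤ 6) (hC₀ : 0 < C₀) :
    ∃ C : ℝ, 0 < C ∧ ∀ {u w b : E3 → E3} {Φ Ψ Υ : E3 → Fin 3 → Fin 3 → ℝ},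
      IsPotential Φ u → IsPotential Ψ b → IsPotential Υ w → ∀ r : ℝ, 0 < r →
      meanOsc Φ s (4 * r) + meanOsc Ψ s (4 * r) + meanOsc Υ s (4 * r) ≤
        C₀ * (4 * r) ^ ((1 : ℝ) / 3 - 1 / s) →
      r⁻¹ * (∫ x in ball3 (2 * r) \ ball3 r, (‖u x‖ ^ 3 + ‖b x‖ ^ 3 + ‖w x‖ ^ 3)) ≤
        C * (((∫ x in ball3 (4 * r) \ ball3 (r / 2), gradSq u x) ^ ((1 : ℝ) / 2))
                ^ (18 / (s + 6))
            + ((∫ x in ball3 (4 * r) \ ball3 (r / 2), gradSq b x) ^ ((1 : ℝ) / 2))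
                ^ (18 / (s + 6))
            + ((∫ x in ball3 (4 * r) \ ball3 (r / 2), gradSq w x) ^ ((1 : ℝ) / 2))
                ^ (18 / (s + 6))
            + r ^ (-(3 / s))) := by
  obtain ⟨C, hC, norm_cube_le⟩ := exists_inv_mul_setIntegral_norm_cube_le hs3 hs6 hC₀
  refine ⟨3 * C, by positivity, fun {u w b Φ Ψ Υ} hΦu hΨb hΥw r hr hosc => ?_⟩
  have := hΦu.contDiff_field.continuous
  have := hΨb.contDiff_field.continuous
  have := hΥw.contDiff_field.continuous
  have integrable {k : E3 → ℝ} (hk : Continuous k) :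
      IntegrableOn k (ball3 (2 * r) \ ball3 r) volume :=
    integrableOn_of_continuous_of_isBounded hk (isBounded_ball.subset Set.sdiff_subset)
  have integral_eq : ∫ x in ball3 (2 * r) \ ball3 r, (‖u x‖ ^ 3 + ‖b x‖ ^ 3 + ‖w x‖ ^ 3) =
      (∫ x in ball3 (2 * r) \ ball3 r, ‖u x‖ ^ 3) +
        (∫ x in ball3 (2 * r) \ ball3 r, ‖b x‖ ^ 3) +
          ∫ x in ball3 (2 * r) \ ball3 r, ‖w x‖ ^ 3 := by
    rw [integral_add, integral_add] <;> exact integrable (by fun_prop)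
  have hΦ := meanOsc_nonneg Φ s (4 * r)
  have hΨ := meanOsc_nonneg Ψ s (4 * r)
  have hΥ := meanOsc_nonneg Υ s (4 * r)
  have grad_nonneg (v : E3 → E3) : 0 ≤ C *
      ((∫ x in ball3 (4 * r) \ ball3 (r / 2), gradSq v x) ^ ((1 : ℝ) / 2)) ^ (18 / (s + 6)) := by
    have : 0 ≤ ∫ x in ball3 (4 * r) \ ball3 (r / 2), gradSq v x :=
      integral_nonneg (gradSq_nonneg v)
    positivity
  rw [integral_eq, mul_add, mul_add]
  linarith [norm_cube_le hΦu hr (by linarith), norm_cube_le hΨb hr (by linarith),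
    norm_cube_le hΥw hr (by linarith), grad_nonneg u, grad_nonneg b, grad_nonneg w]

/-- Annulus estimate for the cubic integrals under the potential growth hypothesis. -/
theorem annulus_cubic_estimate
    (u w b : E3 → E3) (P : E3 → ℝ) (hsol : IsMMPSolution u w b P)
    (Φ Ψ Υ : E3 → Fin 3 → Fin 3 → ℝ)
    (hΦ : ∀ i j, ContDiff ℝ (⊤ : ℕ∞) (fun x => Φ x i j))
    (hΨ : ∀ i j, ContDiff ℝ (⊤ : ℕ∞) (fun x => Ψ x i j))
    (hΥ : ∀ i j, ContDiff ℝ (⊤ : ℕ∞) (fun x => Υ x i j))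
    (hΦu : ∀ (x : E3) (j : Fin 3), mdiv Φ x j = u x j)
    (hΨb : ∀ (x : E3) (j : Fin 3), mdiv Ψ x j = b x j)
    (hΥw : ∀ (x : E3) (j : Fin 3), mdiv Υ x j = w x j)
    (s : ℝ) (hs1 : 3 < s) (hs2 : s ≤ 6)
    (C₀ : ℝ) (hC₀ : 0 < C₀)
    (hosc : ∀ r : ℝ, 1 < r →
      meanOsc Φ s r + meanOsc Ψ s r + meanOsc Υ s r ≤ C₀ * r ^ ((1:ℝ)/3 - 1/s))
    : ∃ C : ℝ, 0 < C ∧ ∀ r : ℝ, 1 < r →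
      r⁻¹ * (∫ x in ball3 (2 * r) \ ball3 r, (‖u x‖ ^ 3 + ‖b x‖ ^ 3 + ‖w x‖ ^ 3)) ≤
        C * (((∫ x in ball3 (4 * r) \ ball3 (r / 2), gradSq u x) ^ ((1:ℝ)/2))
                ^ (18 / (s + 6))
            + ((∫ x in ball3 (4 * r) \ ball3 (r / 2), gradSq b x) ^ ((1:ℝ)/2))
                ^ (18 / (s + 6))
            + ((∫ x in ball3 (4 * r) \ ball3 (r / 2), gradSq w x) ^ ((1:ℝ)/2))
                ^ (18 / (s + 6))
            + r ^ (-(3 / s))) := by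
  obtain ⟨C, hC, cubic_le⟩ := annulus_cubic_estimate_general hs1.le hs2 hC₀
  have one_le : (1 : WithTop ℕ∞) ≤ (⊤ : ℕ∞) := mod_cast le_top
  exact ⟨C, hC, fun r hr => cubic_le
    ⟨hsol.smooth_u.of_le one_le, fun i j => (hΦ i j).of_le one_le, hΦu⟩
    ⟨hsol.smooth_b.of_le one_le, fun i j => (hΨ i j).of_le one_le, hΨb⟩
    ⟨hsol.smooth_w.of_le one_le, fun i j => (hΥ i j).of_le one_le, hΥw⟩
    r (by linarith) (hosc (4 * r) (by linarith))⟩
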